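/- Let n ≥ 1 and q a prime power, and let A be the adjacency matrix of the opposition graph on complete flags of V = F_q^{n+1}. Then every real eigenvalue λ of A satisfies λ ≥ −(√q)^{n²−1}, and −(√q)^{n²−1} is an eigenvalue of A; i.e., the smallest eigenvalue of A equals −q^{(n²−1)/2}. -/

import Mathlib

/-- A complete flag in `V = F^{n+1}`: a chain of subspaces `U_1 ⊂ … ⊂ U_n` with
`dim U_i = i` (here `U i` has dimension `i+1` for `i : Fin n`). -/
structure CompleteFlag (F : Type) [Field F] (n : ℕ) where
  U : Fin n → Submodule F (Fin (n + 1) → F)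
  dim : ∀ i : Fin n, Module.finrank F (U i) = i + 1
  mono : Monotone U

/-- Two complete flags `(U_i)` and `(W_i)` are opposite if `U_i ∩ W_{n+1−i} = 0` for all
`i`; with our indexing, the subspace of dimension `n+1-(i+1)` is `W i.rev`. -/
def CompleteFlag.Opposite {F : Type} [Field F] {n : ℕ}
    (F1 F2 : CompleteFlag F n) : Prop :=
  ∀ i : Fin n, F1.U i ⊓ F2.U i.rev = ⊥

/-!
The operators `T k` of summing over the flags `k`-adjacent to a given one satisfy
`(T k - q) * (T k + 1) = 0`, and the adjacency operator of the opposition graph is the half twist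
`A = (T 0) * (T 1 * T 0) * ⋯ * (T (n - 1) * ⋯ * T 0)`, since opposition is reached by a unique
gallery of this type. Moreover `A * T k = T (n - 1 - k) * A`.

An eigenvector of `A` with negative eigenvalue `μ` is orthogonal to the constants, so it lies in the
space `E` of functions with sum `0` on which `A ^ 2` is `μ ^ 2`. This space is stable under all
`T k`, and `|det (T k)| = q ^ dim (ker (T k - q))` on `E`. A common `q`-eigenvector of all `T k` is
constant, hence zero in `E`, so the codimensions of these kernels add up to at least `dim E`. Every
generator has, up to the symmetry `k ↦ n - 1 - k`, multiplicity `(n + 1) / 2` in `A`, whence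
`|μ| ^ (2 * dim E) = (∏ k, |det (T k)|) ^ (n + 1) ≤ q ^ ((n - 1) * (n + 1) * dim E)`.

Equality occurs in the reflection representation of the Hecke algebra, which is spanned by the
functions `f i = 1[x ∈ U_i] - 1[y ∈ U_i]` for fixed nonzero `x` and `y`: there
`√q ^ (n - 1) • f 1 + f n` is an eigenvector of `A`.
-/

open Module

section HalfTwist

variable {M : Type*} [Monoid M]

/-- The descending product `t (m - 1) * ⋯ * t 1 * t 0`. -/
def descProd (t : ℕ → M) : ℕ → M
  | 0 => 1
  | m + 1 => t m * descProd t m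

/-- Garside's half twist `(t 0) * (t 1 * t 0) * ⋯ * (t (n - 1) * ⋯ * t 0)`, the lift of the longest
element of the symmetric group on `n + 1` letters to a family `t` satisfying the braid
relations. -/
def halfTwist (t : ℕ → M) : ℕ → M
  | 0 => 1
  | m + 1 => halfTwist t m * descProd t (m + 1)

theorem map_descProd {N : Type*} [Monoid N] (φ : M →* N) (t : ℕ → M) (m : ℕ) :
    φ (descProd t m) = descProd (φ ∘ t) m := by
  induction m with
  | zero => exact map_one φ
  | succ m ih => simp [descProd, ih]

theorem map_halfTwist {N : Type*} [Monoid N] (φ : M →* N) (t : ℕ → M) (n : ℕ) :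
    φ (halfTwist t n) = halfTwist (φ ∘ t) n := by
  induction n with
  | zero => exact map_one φ
  | succ n ih => simp [halfTwist, ih, map_descProd]

theorem descProd_eq_prod {M : Type*} [CommMonoid M] (t : ℕ → M) (m : ℕ) :
    descProd t m = ∏ i ∈ Finset.range m, t i := by
  induction m with
  | zero => simp [descProd]
  | succ m ih => rw [descProd, ih, Finset.prod_range_succ, mul_comm]

theorem halfTwist_eq_prod_pow {M : Type*} [CommMonoid M] (t : ℕ → M) (n : ℕ) :
    halfTwist t n = ∏ i ∈ Finset.range n, t i ^ (n - i) := by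
  induction n with
  | zero => simp [halfTwist]
  | succ n ih =>
    rw [halfTwist, ih, descProd_eq_prod, Finset.prod_range_succ, Finset.prod_range_succ,
      ← mul_assoc, ← Finset.prod_mul_distrib, Nat.add_sub_cancel_left, pow_one]
    congr 1
    refine Finset.prod_congr rfl fun i hi ↦ ?_
    rw [Nat.succ_sub (Finset.mem_range.1 hi).le, pow_succ]

theorem halfTwist_sq_of_symm {M : Type*} [CommMonoid M] {t : ℕ → M} {n : ℕ}
    (ht : ∀ i < n, t (n - 1 - i) = t i) :
    halfTwist t n ^ 2 = (∏ i ∈ Finset.range n, t i) ^ (n + 1) := by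
  rw [halfTwist_eq_prod_pow, sq]
  nth_rw 1 [← Finset.prod_range_reflect]
  rw [← Finset.prod_mul_distrib, ← Finset.prod_pow]
  refine Finset.prod_congr rfl fun i hi ↦ ?_
  have hi : i < n := Finset.mem_range.1 hi
  rw [ht i hi, ← pow_add]
  congr 1
  omega

theorem map_halfTwist_apply {R V W : Type*} [Semiring R] [AddCommMonoid V] [Module R V]
    [AddCommMonoid W] [Module R W] {t : ℕ → End R V} {t' : ℕ → End R W} (φ : V →ₗ[R] W)
    (h : ∀ i x, φ (t i x) = t' i (φ x)) (n : ℕ) (x : V) :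
    φ (halfTwist t n x) = halfTwist t' n (φ x) := by
  have hdesc (m : ℕ) (x : V) : φ (descProd t m x) = descProd t' m (φ x) := by
    induction m with
    | zero => rfl
    | succ m ih => simp [descProd, h, ih]
  induction n generalizing x with
  | zero => rfl
  | succ n ih => simp only [halfTwist, End.mul_apply, ih, hdesc]

end HalfTwist

section Determinant

variable {K V : Type*} [Field K] [AddCommGroup V] [Module K V]

theorem finrank_le_sum_finrank_quotient [FiniteDimensional K V] {ι : Type*} [Fintype ι]
    (W : ι → Submodule K V) (hW : ⨅ i, W i = ⊥) :
    finrank K V ≤ ∑ i, finrank K (V ⧸ W i) := by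
  rw [← finrank_pi_fintype]
  refine LinearMap.finrank_le_finrank_of_injective (f := LinearMap.pi fun i ↦ (W i).mkQ) ?_
  rw [← LinearMap.ker_eq_bot, LinearMap.ker_pi]
  simpa only [Submodule.ker_mkQ] using hW

theorem det_eq_pow_finrank_eigenspace_mul [FiniteDimensional K V] {t : End K V} {a b : K}
    (h : (t - a • 1) * (t - b • 1) = 0) :
    LinearMap.det t =
      a ^ finrank K (t.eigenspace a) * b ^ finrank K (V ⧸ t.eigenspace a) := by
  set W := t.eigenspace a
  have hW : ∀ x ∈ W, t x = a • x := fun x hx ↦ End.mem_eigenspace_iff.1 hx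
  have hmem (x : V) : t x - b • x ∈ W := by
    rw [End.mem_eigenspace_iff, ← sub_eq_zero]
    exact LinearMap.congr_fun h x
  have hstable : W ≤ W.comap t := fun x hx ↦ by
    rw [Submodule.mem_comap, hW x hx]
    exact W.smul_mem a hx
  have hres : t.restrict (p := W) (q := W) hstable = a • LinearMap.id := by
    ext x
    exact hW x x.2
  have hquot : W.mapQ W t hstable = b • LinearMap.id := by
    ext x
    exact (Submodule.Quotient.eq W).2 (hmem x)
  rw [LinearMap.det_eq_det_mul_det W t hstable, hres, hquot, LinearMap.det_smul,
    LinearMap.det_smul, LinearMap.det_id, LinearMap.det_id, mul_one, mul_one]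

theorem abs_det_eq_pow_finrank_eigenspace [LinearOrder K] [IsStrictOrderedRing K]
    [FiniteDimensional K V] {t : End K V} {q : K} (hq : 0 ≤ q) (h : (t - q • 1) * (t + 1) = 0) :
    |LinearMap.det t| = q ^ finrank K (t.eigenspace q) := by
  have h' : (t - q • 1) * (t - (-1 : K) • 1) = 0 := by simpa using h
  rw [det_eq_pow_finrank_eigenspace_mul h', abs_mul, abs_pow, abs_pow, abs_neg, abs_one, one_pow,
    mul_one, abs_of_nonneg hq]

theorem sum_finrank_eigenspace_add_finrank_le [FiniteDimensional K V] {n : ℕ} {q : K}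
    {t : ℕ → End K V}
    (hfix : ∀ x, (∀ i < n, t i x = q • x) → x = 0) :
    ∑ i ∈ Finset.range n, finrank K ((t i).eigenspace q) + finrank K V ≤ n * finrank K V := by
  have hinf : ⨅ i : Fin n, (t i).eigenspace q = ⊥ := by
    refine (Submodule.eq_bot_iff _).2 fun x hx ↦ hfix x fun i hi ↦ ?_
    exact End.mem_eigenspace_iff.1 ((Submodule.mem_iInf _).1 hx ⟨i, hi⟩)
  calc ∑ i ∈ Finset.range n, finrank K ((t i).eigenspace q) + finrank K V
      ≤ ∑ i : Fin n, finrank K ((t i).eigenspace q) +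
          ∑ i : Fin n, finrank K (V ⧸ (t i).eigenspace q) := by
        rw [Finset.sum_range]
        exact Nat.add_le_add_left (finrank_le_sum_finrank_quotient _ hinf) _
    _ = n * finrank K V := by
        simp only [← Finset.sum_add_distrib, add_comm, Submodule.finrank_quotient_add_finrank,
          Finset.sum_const, Finset.card_univ, Fintype.card_fin, smul_eq_mul]

theorem det_halfTwist_sq {n : ℕ} {t : ℕ → End K V}
    (hdet : LinearMap.det (halfTwist t n) ≠ 0)
    (hcomm : ∀ i < n, halfTwist t n * t i = t (n - 1 - i) * halfTwist t n) :
    LinearMap.det (halfTwist t n) ^ 2 =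
      (∏ i ∈ Finset.range n, LinearMap.det (t i)) ^ (n + 1) := by
  rw [map_halfTwist LinearMap.det]
  refine halfTwist_sq_of_symm fun i hi ↦ ?_
  have h := congrArg LinearMap.det (hcomm i hi)
  rw [map_mul, map_mul, mul_comm] at h
  exact (mul_right_cancel₀ hdet h).symm

theorem abs_le_pow_of_halfTwist_sq [LinearOrder K] [IsStrictOrderedRing K]
    [FiniteDimensional K V] [Nontrivial V] {n : ℕ} {q : K} {t : ℕ → End K V} (hq : 1 ≤ q)
    (hquad : ∀ i < n, (t i - q • 1) * (t i + 1) = 0)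
    (hcomm : ∀ i < n, halfTwist t n * t i = t (n - 1 - i) * halfTwist t n)
    (hfix : ∀ x, (∀ i < n, t i x = q • x) → x = 0) {μ : K}
    (hsq : halfTwist t n * halfTwist t n = μ • 1) :
    |μ| ≤ q ^ (n ^ 2 - 1) := by
  set d := finrank K V
  have hd : d ≠ 0 := finrank_pos.ne'
  set a := fun i ↦ finrank K ((t i).eigenspace q)
  have hdet_abs : ∀ i ∈ Finset.range n, |LinearMap.det (t i)| = q ^ a i := fun i hi ↦
    abs_det_eq_pow_finrank_eigenspace (by positivity) (hquad i (Finset.mem_range.1 hi))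
  have hdet_sq : LinearMap.det (halfTwist t n) ^ 2 = μ ^ d := by
    rw [sq, ← map_mul, hsq, LinearMap.det_smul, map_one, mul_one]
  rcases eq_or_ne μ 0 with rfl | hμ
  · rw [abs_zero]
    positivity
  have hdet : LinearMap.det (halfTwist t n) ≠ 0 := fun h ↦ by
    rw [h, zero_pow two_ne_zero] at hdet_sq
    exact pow_ne_zero d hμ hdet_sq.symm
  have hdim : (∑ i ∈ Finset.range n, a i) * (n + 1) ≤ (n ^ 2 - 1) * d := by
    have hsum : _ + d ≤ n * d := sum_finrank_eigenspace_add_finrank_le hfix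
    have hn : n ^ 2 - 1 = (n + 1) * (n - 1) := Nat.sq_sub_sq n 1
    rw [hn, mul_comm, mul_assoc]
    refine Nat.mul_le_mul_left _ ?_
    rw [Nat.sub_mul, one_mul]
    exact Nat.le_sub_of_add_le hsum
  refine (pow_le_pow_iff_left₀ (abs_nonneg μ) (by positivity) hd).1 ?_
  calc |μ| ^ d = (∏ i ∈ Finset.range n, |LinearMap.det (t i)|) ^ (n + 1) := by
        rw [← abs_pow, ← hdet_sq, det_halfTwist_sq hdet hcomm, abs_pow, Finset.abs_prod]
    _ = q ^ ((∑ i ∈ Finset.range n, a i) * (n + 1)) := by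
        rw [Finset.prod_congr rfl hdet_abs, Finset.prod_pow_eq_pow_sum, pow_mul]
    _ ≤ (q ^ (n ^ 2 - 1)) ^ d := by
        rw [← pow_mul]
        exact pow_le_pow_right₀ hq hdim

theorem abs_le_pow_of_halfTwist_sq_of_invariant [LinearOrder K] [IsStrictOrderedRing K]
    {E : Submodule K V} [FiniteDimensional K E] (hE : E ≠ ⊥) {n : ℕ} {q : K} {t : ℕ → End K V}
    (hstable : ∀ i, ∀ x ∈ E, t i x ∈ E) (hq : 1 ≤ q)
    (hquad : ∀ i < n, (t i - q • 1) * (t i + 1) = 0)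
    (hcomm : ∀ i < n, halfTwist t n * t i = t (n - 1 - i) * halfTwist t n)
    (hfix : ∀ x ∈ E, (∀ i < n, t i x = q • x) → x = 0) {μ : K}
    (hsq : ∀ x ∈ E, halfTwist t n (halfTwist t n x) = μ • x) :
    |μ| ≤ q ^ (n ^ 2 - 1) := by
  have := Submodule.nontrivial_iff_ne_bot.2 hE
  let u : ℕ → End K E := fun i ↦ (t i).restrict (hstable i)
  have hcoe (x : E) : (halfTwist u n x : V) = halfTwist t n x :=
    map_halfTwist_apply E.subtype (fun _ _ ↦ rfl) n x
  refine abs_le_pow_of_halfTwist_sq (t := u) hq (fun i hi ↦ ?_) (fun i hi ↦ ?_)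
    (fun x hx ↦ ?_) ?_
  · exact LinearMap.ext fun x ↦ Subtype.ext (LinearMap.congr_fun (hquad i hi) x)
  · refine LinearMap.ext fun x ↦ Subtype.ext ?_
    have hx := LinearMap.congr_fun (hcomm i hi) x
    simp only [End.mul_apply] at hx ⊢
    exact (hcoe _).trans (hx.trans (congrArg (t (n - 1 - i)) (hcoe x).symm))
  · exact Subtype.ext (hfix x x.2 fun i hi ↦ congrArg Subtype.val (hx i hi))
  · refine LinearMap.ext fun x ↦ Subtype.ext ?_
    rw [End.mul_apply, hcoe, hcoe, hsq x x.2]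
    rfl

end Determinant

section ReflectionRepresentation

variable {R V : Type*} [CommRing R] [AddCommGroup V] [Module R V]

/-- The operators `t 0, …, t (n - 1)` act on `f 1, …, f n` as the generators of the Hecke algebra
of type `A_n` with parameter `s ^ 2` act in its reflection representation. -/
structure IsReflectionFamily (n : ℕ) (s : R) (t : ℕ → End R V) (f : ℕ → V) : Prop where
  zero : f 0 = 0
  last : f (n + 1) = 0
  apply_of_ne : ∀ j < n, ∀ i ≠ j + 1, t j (f i) = s ^ 2 • f i
  apply_succ : ∀ j < n, t j (f (j + 1)) = f (j + 2) + s ^ 2 • f j - f (j + 1)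

namespace IsReflectionFamily

variable {n : ℕ} {s : R} {t : ℕ → End R V} {f : ℕ → V}

theorem descProd_apply_of_lt (h : IsReflectionFamily n s t f) {m i : ℕ} (hm : m ≤ n)
    (hi : m < i) : descProd t m (f i) = s ^ (2 * m) • f i := by
  induction m with
  | zero => simp [descProd]
  | succ m ih =>
    rw [descProd, End.mul_apply, ih (by omega) (by omega), map_smul,
      h.apply_of_ne m hm i (by omega), smul_smul, ← pow_add]
    rfl

theorem halfTwist_apply_of_lt (h : IsReflectionFamily n s t f) {m i : ℕ} (hm : m ≤ n)
    (hi : m < i) : halfTwist t m (f i) = s ^ (m * (m + 1)) • f i := by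
  induction m with
  | zero => simp [halfTwist]
  | succ m ih =>
    rw [halfTwist, End.mul_apply, h.descProd_apply_of_lt hm hi, map_smul,
      ih (by omega) (by omega), smul_smul, ← pow_add]
    ring_nf

theorem descProd_apply_one (h : IsReflectionFamily n s t f) {m : ℕ} (hm : m ≤ n) :
    descProd t m (f 1) = f (m + 1) - f m := by
  induction m with
  | zero => simp [descProd, h.zero]
  | succ m ih =>
    rw [descProd, End.mul_apply, ih (by omega), map_sub, h.apply_succ m hm,
      h.apply_of_ne m hm m (by omega)]
    abel

theorem halfTwist_succ_apply_succ (h : IsReflectionFamily n s t f) {m : ℕ} (hm : m < n) :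
    halfTwist t (m + 1) (f (m + 1)) = s ^ (m * (m + 3)) • (f (m + 2) - f 1) := by
  have hstep (m : ℕ) (hm : m < n) : halfTwist t (m + 1) (f (m + 1)) =
      s ^ (2 * m) • halfTwist t m (f (m + 2) + s ^ 2 • f m - f (m + 1)) := by
    rw [halfTwist, descProd, End.mul_apply, End.mul_apply,
      h.descProd_apply_of_lt hm.le m.lt_succ_self, map_smul, map_smul, h.apply_succ m hm]
  induction m with
  | zero =>
    rw [hstep 0 hm, h.zero]
    simp [halfTwist]
  | succ m ih =>
    rw [hstep (m + 1) hm, map_sub, map_add, map_smul, ih (by omega),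
      h.halfTwist_apply_of_lt hm.le (by omega), h.halfTwist_apply_of_lt hm.le (by omega)]
    module

theorem halfTwist_apply_smul_add {m : ℕ} (h : IsReflectionFamily (m + 1) s t f) :
    halfTwist t (m + 1) (s ^ m • f 1 + f (m + 1)) =
      -(s ^ (m * (m + 2))) • (s ^ m • f 1 + f (m + 1)) := by
  have hfirst : halfTwist t (m + 1) (f 1) = -(s ^ (m * (m + 1)) • f (m + 1)) := by
    rw [halfTwist, End.mul_apply, h.descProd_apply_one le_rfl, h.last, zero_sub, map_neg,
      h.halfTwist_apply_of_lt m.le_succ m.lt_succ_self]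
  rw [map_add, map_smul, hfirst, h.halfTwist_succ_apply_succ m.lt_succ_self, h.last]
  module

end IsReflectionFamily

end ReflectionRepresentation

section RelMatrix

variable (K : Type*) [Semiring K] {α : Type*} {r s p : α → α → Prop}

open scoped Classical in
/-- The `0`-`1` matrix of a binary relation. -/
noncomputable def relMatrix (r : α → α → Prop) : Matrix α α K :=
  Matrix.of fun x y ↦ if r x y then 1 else 0

theorem relMatrix_eq [DecidableEq α] : relMatrix K (Eq : α → α → Prop) = 1 := by
  ext x y
  simp [relMatrix, Matrix.one_apply]

theorem relMatrix_congr (h : ∀ x y, r x y ↔ s x y) : relMatrix K r = relMatrix K s := by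
  classical
  ext x y
  exact if_congr (h x y) rfl rfl

theorem transpose_relMatrix (h : ∀ x y, r x y ↔ s y x) :
    (relMatrix K r).transpose = relMatrix K s := by
  classical
  ext x y
  exact if_congr (h y x) rfl rfl

open scoped Classical in
theorem relMatrix_mulVec_apply [Fintype α] (r : α → α → Prop) (f : α → K) (x : α) :
    (relMatrix K r).mulVec f x = ∑ y with r x y, f y := by
  simp [relMatrix, Matrix.mulVec, dotProduct, Finset.sum_filter]

theorem relMatrix_mul_eq_smul [Fintype α] {c : ℕ} (hcomp : ∀ x y z, r x y → s y z → p x z)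
    (hcard : ∀ x z, p x z → {y | r x y ∧ s y z}.ncard = c) :
    relMatrix K r * relMatrix K s = (c : K) • relMatrix K p := by
  classical
  ext x z
  have hsum : (relMatrix K r * relMatrix K s) x z = ({y | r x y ∧ s y z}.ncard : K) := by
    simp [relMatrix, Matrix.mul_apply, ← ite_and, Set.ncard_eq_toFinset_card',
      and_comm]
  rw [hsum, Matrix.smul_apply, relMatrix, Matrix.of_apply]
  split_ifs with hp
  · rw [hcard x z hp, smul_eq_mul, mul_one]
  · have hempty : {y | r x y ∧ s y z} = ∅ :=
      Set.eq_empty_of_forall_notMem fun y hy ↦ hp (hcomp x y z hy.1 hy.2)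
    rw [hempty, Set.ncard_empty, Nat.cast_zero, smul_zero]

theorem relMatrix_mul_eq [Fintype α] (h : ∀ x z, p x z → ∃! y, r x y ∧ s y z)
    (hcomp : ∀ x y z, r x y → s y z → p x z) :
    relMatrix K r * relMatrix K s = relMatrix K p := by
  rw [relMatrix_mul_eq_smul K (c := 1) hcomp fun x z hp ↦ ?_, Nat.cast_one, one_smul]
  obtain ⟨y, hy, huniq⟩ := h x z hp
  exact Set.ncard_eq_one.2 ⟨y, Set.eq_singleton_iff_unique_mem.2 ⟨hy, huniq⟩⟩

end RelMatrix

theorem finrank_flag {K V : Type*} [Field K] [AddCommGroup V] [Module K V] {m : ℕ}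
    (b : Basis (Fin m) K V) (k : Fin (m + 1)) : finrank K (b.flag k) = k := by
  have := b.finiteDimensional_of_finite
  induction k using Fin.induction with
  | zero => simp
  | succ k ih =>
    have hk : b k ∉ b.flag k.castSucc := by simp [b.self_mem_flag_iff]
    rw [b.flag_succ, sup_comm, Submodule.finrank_sup_span_singleton hk, ih, Fin.val_castSucc,
      Fin.val_succ]

theorem not_disjoint_of_finrank_lt {K V : Type*} [Field K] [AddCommGroup V] [Module K V]
    [FiniteDimensional K V] {U W W' : Submodule K V} (hW : W ≤ U) (hW' : W' ≤ U)
    (h : finrank K U < finrank K W + finrank K W') : ¬Disjoint W W' := fun hdisj ↦ by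
  have hsup := Submodule.finrank_mono (sup_le hW hW')
  rw [← Submodule.finrank_sup_add_finrank_inf_eq, hdisj.eq_bot, finrank_bot, add_zero] at h
  exact h.not_ge hsup

namespace CompleteFlag

variable {F : Type} [Field F] {n : ℕ} {C D E : CompleteFlag F n}

section Space

/-- The `i`-dimensional subspace of a complete flag, for all natural numbers `i`: the flag is
extended by `0` in dimension `0` and by the whole space beyond dimension `n`. -/
def space (C : CompleteFlag F n) : ℕ → Submodule F (Fin (n + 1) → F)
  | 0 => ⊥
  | i + 1 => if h : i < n then C.U ⟨i, h⟩ else ⊤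

@[simp]
theorem space_zero (C : CompleteFlag F n) : C.space 0 = ⊥ := rfl

theorem space_succ (C : CompleteFlag F n) (i : Fin n) : C.space (i + 1) = C.U i := by
  simp [space]

theorem space_eq_top (C : CompleteFlag F n) {i : ℕ} (hi : n < i) : C.space i = ⊤ := by
  obtain ⟨i, rfl⟩ := Nat.exists_eq_add_of_lt hi
  simp [space]

theorem finrank_space (C : CompleteFlag F n) {i : ℕ} (hi : i ≤ n + 1) :
    finrank F (C.space i) = i := by
  rcases hi.eq_or_lt with rfl | hi
  · rw [C.space_eq_top n.lt_succ_self, finrank_top, finrank_fin_fun]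
  · rcases i with _ | i
    · exact finrank_bot F _
    · rw [C.space_succ ⟨i, Nat.lt_of_succ_lt_succ hi⟩, C.dim]

theorem space_mono (C : CompleteFlag F n) : Monotone C.space := by
  refine monotone_nat_of_le_succ fun i ↦ ?_
  rcases i with _ | i
  · exact bot_le
  · by_cases h : i + 1 < n
    · rw [C.space_succ ⟨i, by omega⟩, C.space_succ ⟨i + 1, h⟩]
      exact C.mono (Nat.le_succ i)
    · rw [C.space_eq_top (i := i + 1 + 1) (by omega)]
      exact le_top

theorem space_injective : Function.Injective (space : CompleteFlag F n → _) := by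
  intro C D h
  have hU : C.U = D.U := funext fun i ↦ by rw [← C.space_succ, h, D.space_succ]
  cases C
  congr

theorem space_eq_of_le {i : ℕ} (h : C.space i ≤ D.space i) : C.space i = D.space i := by
  rcases le_or_gt i (n + 1) with hi | hi
  · exact Submodule.eq_of_le_of_finrank_eq h (by rw [C.finrank_space hi, D.finrank_space hi])
  · rw [C.space_eq_top (by omega), D.space_eq_top (by omega)]

theorem space_sup_span_singleton {i : ℕ} {x : Fin (n + 1) → F} (hx : x ∈ C.space (i + 1))
    (hx' : x ∉ C.space i) : C.space i ⊔ Submodule.span F {x} = C.space (i + 1) := by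
  have hi : i ≤ n := by
    by_contra! hi
    exact hx' (C.space_eq_top hi ▸ Submodule.mem_top)
  refine Submodule.eq_of_le_of_finrank_eq
    (sup_le (C.space_mono i.le_succ) ((Submodule.span_singleton_le_iff_mem _ _).2 hx)) ?_
  rw [Submodule.finrank_sup_span_singleton hx', C.finrank_space (by omega),
    C.finrank_space (by omega)]

theorem exists_mem_space_succ_notMem (C : CompleteFlag F n) {i : ℕ} (hi : i ≤ n) :
    ∃ x ∈ C.space (i + 1), x ∉ C.space i := by
  refine SetLike.exists_of_lt ((C.space_mono i.le_succ).lt_of_ne fun h ↦ ?_)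
  have := congrArg (fun W : Submodule F (Fin (n + 1) → F) ↦ finrank F W) h
  simp only [C.finrank_space (show i ≤ n + 1 by omega),
    C.finrank_space (show i + 1 ≤ n + 1 by omega)] at this
  omega

theorem exists_space_eq (S : ℕ → Submodule F (Fin (n + 1) → F)) (hmono : Monotone S)
    (hdim : ∀ i ≤ n + 1, finrank F (S i) = i) :
    ∃ C : CompleteFlag F n, ∀ i ≤ n + 1, C.space i = S i := by
  refine ⟨⟨fun i ↦ S (i + 1), fun i ↦ hdim _ (by omega),
    fun i j hij ↦ hmono (Nat.succ_le_succ hij)⟩, fun i hi ↦ ?_⟩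
  rcases i with _ | i
  · exact (Submodule.finrank_eq_zero.1 (hdim 0 hi)).symm
  · by_cases h : i < n
    · simp [space, h]
    · obtain rfl : i = n := by omega
      rw [space_eq_top _ i.lt_succ_self,
        Submodule.eq_top_of_finrank_eq ((hdim _ le_rfl).trans (finrank_fin_fun F).symm)]

instance : Nonempty (CompleteFlag F n) := by
  let b := Pi.basisFun F (Fin (n + 1))
  refine ⟨⟨fun i ↦ b.flag i.succ.castSucc, fun i ↦ ?_, fun i j hij ↦ ?_⟩⟩
  · rw [finrank_flag]
    rfl
  · exact b.flag_mono (by simpa using hij)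

theorem opposite_iff :
    C.Opposite D ↔ ∀ i j, i + j = n + 1 → Disjoint (C.space i) (D.space j) := by
  refine ⟨fun h i j hij ↦ ?_, fun h i ↦ ?_⟩
  · rcases i with _ | i
    · exact disjoint_bot_left
    · rcases j with _ | j
      · exact disjoint_bot_right
      · have hi : i < n := by omega
        obtain rfl : j = (Fin.rev ⟨i, hi⟩ : Fin n) := by
          simp only [Fin.val_rev]
          omega
        rw [C.space_succ ⟨i, hi⟩, D.space_succ, disjoint_iff]
        exact h ⟨i, hi⟩
  · rw [← C.space_succ, ← D.space_succ, ← disjoint_iff]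
    refine h _ _ ?_
    rw [Fin.val_rev]
    omega

theorem Opposite.symm (h : C.Opposite D) : D.Opposite C :=
  opposite_iff.2 fun i j hij ↦ (opposite_iff.1 h j i (by omega)).symm

end Space

section Panel

/-- Two flags lie in the same `k`-panel if they agree except possibly in dimension `k + 1`
(so `k`, like the index of `CompleteFlag.U`, starts at `0`). -/
def SamePanel (k : ℕ) (C D : CompleteFlag F n) : Prop :=
  ∀ j, j ≠ k + 1 → C.space j = D.space j

/-- Two flags are `k`-adjacent if they are distinct and lie in the same `k`-panel. -/
def Adjacent (k : ℕ) (C D : CompleteFlag F n) : Prop :=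
  C ≠ D ∧ SamePanel k C D

variable {k : ℕ}

namespace SamePanel

theorem refl (k : ℕ) (C : CompleteFlag F n) : SamePanel k C C := fun _ _ ↦ rfl

theorem symm (h : SamePanel k C D) : SamePanel k D C := fun j hj ↦ (h j hj).symm

theorem trans (h : SamePanel k C D) (h' : SamePanel k D E) : SamePanel k C E :=
  fun j hj ↦ (h j hj).trans (h' j hj)

theorem space_left (h : SamePanel k C D) : C.space k = D.space k := h k (by omega)

theorem space_right (h : SamePanel k C D) : C.space (k + 2) = D.space (k + 2) :=
  h (k + 2) (by omega)

theorem space_left_le (h : SamePanel k C D) : C.space k ≤ D.space (k + 1) :=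
  h.space_left ▸ D.space_mono k.le_succ

theorem space_le_right (h : SamePanel k C D) : D.space (k + 1) ≤ C.space (k + 2) :=
  h.space_right ▸ D.space_mono (k + 1).le_succ

theorem eq_of_space_le (h : SamePanel k C D) (hle : C.space (k + 1) ≤ D.space (k + 1)) :
    C = D := by
  refine space_injective (funext fun j ↦ ?_)
  rcases eq_or_ne j (k + 1) with rfl | hj
  · exact space_eq_of_le hle
  · exact h j hj

theorem eq_of_le (hk : n ≤ k) (h : SamePanel k C D) : C = D :=
  h.eq_of_space_le (by rw [D.space_eq_top (by omega)]; exact le_top)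

end SamePanel

theorem Adjacent.symm (h : Adjacent k C D) : Adjacent k D C := ⟨h.1.symm, h.2.symm⟩

theorem exists_samePanel_space_eq (C : CompleteFlag F n) (hk : k < n)
    {W : Submodule F (Fin (n + 1) → F)} (hle : C.space k ≤ W) (hge : W ≤ C.space (k + 2))
    (hW : finrank F W = k + 1) : ∃ E, SamePanel k C E ∧ E.space (k + 1) = W := by
  have hmono : Monotone (Function.update C.space (k + 1) W) := by
    refine monotone_nat_of_le_succ fun i ↦ ?_
    rcases eq_or_ne i (k + 1) with rfl | hi
    · simpa using hge
    · rcases eq_or_ne i k with rfl | hi'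
      · simpa using hle
      · simpa [hi, hi'] using C.space_mono i.le_succ
  obtain ⟨E, hE⟩ := exists_space_eq _ hmono fun i hi ↦ by
    rcases eq_or_ne i (k + 1) with rfl | hik
    · rwa [Function.update_self]
    · rw [Function.update_of_ne hik, C.finrank_space hi]
  refine ⟨E, fun j hj ↦ ?_, by simp [hE (k + 1) (by omega)]⟩
  rcases le_or_gt j (n + 1) with hjn | hjn
  · simp [hE j hjn, hj]
  · rw [C.space_eq_top (by omega), E.space_eq_top (by omega)]

theorem exists_samePanel_mem_iff (hk : k < n) {x : Fin (n + 1) → F} (hx : x ∈ C.space (k + 2))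
    (hx' : x ∉ C.space k) :
    ∃ E, SamePanel k C E ∧ ∀ D, SamePanel k C D → (x ∈ D.space (k + 1) ↔ D = E) := by
  obtain ⟨E, hE, hEx⟩ := C.exists_samePanel_space_eq hk (W := C.space k ⊔ Submodule.span F {x})
    le_sup_left (sup_le (C.space_mono (by omega)) ((Submodule.span_singleton_le_iff_mem _ _).2 hx))
    (by rw [Submodule.finrank_sup_span_singleton hx', C.finrank_space (by omega)])
  have hmem : x ∈ E.space (k + 1) :=
    hEx ▸ Submodule.mem_sup_right (Submodule.mem_span_singleton_self x)
  refine ⟨E, hE, fun D hD ↦ ⟨fun hxD ↦ ?_, fun h ↦ h ▸ hmem⟩⟩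
  refine ((hE.symm.trans hD).eq_of_space_le (hEx ▸ sup_le hD.space_left_le ?_)).symm
  exact (Submodule.span_singleton_le_iff_mem _ _).2 hxD

theorem exists_samePanel_mem (hk : k < n) {x : Fin (n + 1) → F} (hx : x ∈ C.space (k + 2)) :
    ∃ E, SamePanel k C E ∧ x ∈ E.space (k + 1) := by
  by_cases hx' : x ∈ C.space k
  · exact ⟨C, .refl k C, C.space_mono k.le_succ hx'⟩
  · obtain ⟨E, hE, hiff⟩ := exists_samePanel_mem_iff hk hx hx'
    exact ⟨E, hE, (hiff E hE).2 rfl⟩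

theorem ncard_space_diff [Fintype F] (C : CompleteFlag F n) {i j : ℕ} (hij : i ≤ j)
    (hj : j ≤ n + 1) :
    ((C.space j : Set (Fin (n + 1) → F)) \ C.space i).ncard =
      Fintype.card F ^ j - Fintype.card F ^ i := by
  have hcard : ∀ i ≤ n + 1, (C.space i : Set (Fin (n + 1) → F)).ncard = Fintype.card F ^ i :=
    fun i hi ↦ by
      have := natCard_eq_pow_finrank (K := F) (V := C.space i)
      rwa [C.finrank_space hi, Nat.card_eq_fintype_card (α := F)] at this
  rw [Set.ncard_sdiff (C.space_mono hij), hcard j hj, hcard i (hij.trans hj)]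

theorem ncard_samePanel_mul [Fintype F] [Finite (CompleteFlag F n)] (C : CompleteFlag F n)
    (hk : k < n) :
    {D | SamePanel k C D}.ncard * (Fintype.card F ^ (k + 1) - Fintype.card F ^ k) =
      Fintype.card F ^ (k + 2) - Fintype.card F ^ k := by
  classical
  have := Fintype.ofFinite (CompleteFlag F n)
  rw [← C.ncard_space_diff (i := k) (j := k + 2) (by omega) (by omega),
    Set.ncard_eq_toFinset_card', Set.ncard_eq_toFinset_card',
    ← mul_one (Set.toFinset (_ \ _)).card]
  refine Finset.card_mul_eq_card_mul (fun D x ↦ x ∈ space D (k + 1)) ?_ ?_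
  · intro D hD
    have hD : SamePanel k C D := Set.mem_toFinset.1 hD
    rw [← D.ncard_space_diff k.le_succ (by omega), Set.ncard_eq_toFinset_card']
    congr 1
    ext x
    have hle : x ∈ D.space (k + 1) → x ∈ C.space (k + 2) := fun h ↦ hD.space_le_right h
    simp only [Finset.bipartiteAbove, Finset.mem_filter, Set.mem_toFinset, Set.mem_sdiff,
      SetLike.mem_coe, hD.space_left]
    tauto
  · intro x hx
    obtain ⟨hx, hx'⟩ := Set.mem_toFinset.1 hx
    obtain ⟨E, hE, hiff⟩ := exists_samePanel_mem_iff hk hx hx'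
    refine Finset.card_eq_one.2 ⟨E, ?_⟩
    ext D
    simp only [Finset.bipartiteBelow, Finset.mem_filter, Set.mem_toFinset, Set.mem_ofPred_eq,
      Finset.mem_singleton]
    exact ⟨fun h ↦ (hiff D h.1).1 h.2, fun h ↦ h ▸ ⟨hE, (hiff E hE).2 rfl⟩⟩

theorem ncard_samePanel [Fintype F] [Finite (CompleteFlag F n)] (C : CompleteFlag F n)
    (hk : k < n) : {D | SamePanel k C D}.ncard = Fintype.card F + 1 := by
  have hcount := C.ncard_samePanel_mul hk
  have hq : 1 < Fintype.card F := Fintype.one_lt_card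
  have hlt : Fintype.card F ^ k < Fintype.card F ^ (k + 1) := Nat.pow_lt_pow_right hq k.lt_succ_self
  refine Nat.eq_of_mul_eq_mul_right (Nat.sub_pos_of_lt hlt) (hcount.trans ?_)
  zify [hlt.le, Nat.pow_le_pow_right hq.le (show k ≤ k + 2 by omega)]
  ring

/-- The projection `E` is the member of the panel of `D` which meets `C.space (a + 1)`: it is
spanned by `D.space k` and the line in which `C.space (a + 1)` meets `D.space (k + 2)`. -/
theorem exists_panel_projection {a : ℕ} (hn : a + k + 2 ≤ n + 1)
    (htop : C.space (a + k + 2) = D.space (a + k + 2))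
    (hlow : Disjoint (C.space (a + 1)) (D.space k))
    (hhigh : Disjoint (C.space a) (D.space (k + 2))) :
    ∃ E, SamePanel k D E ∧ E.space (k + 1) ≤ D.space k ⊔ C.space (a + 1) ∧
      ∀ G, SamePanel k D G → (Disjoint (C.space (a + 1)) (G.space (k + 1)) ↔ G ≠ E) := by
  have hmeet : ¬Disjoint (C.space (a + 1)) (D.space (k + 2)) :=
    not_disjoint_of_finrank_lt (C.space_mono (show a + 1 ≤ a + k + 2 by omega))
      (htop ▸ D.space_mono (by omega)) (by
        rw [C.finrank_space hn, C.finrank_space (by omega), D.finrank_space (by omega)]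
        omega)
  obtain ⟨x, hxC, hxD, hx0⟩ : ∃ x ∈ C.space (a + 1), x ∈ D.space (k + 2) ∧ x ≠ 0 := by
    simpa [Submodule.disjoint_def] using hmeet
  have hxk : x ∉ D.space k := fun h ↦ hx0 (Submodule.disjoint_def.1 hlow x hxC h)
  obtain ⟨E, hE, hiff⟩ := exists_samePanel_mem_iff (by omega) hxD hxk
  have hxE : x ∈ E.space (k + 1) := (hiff E hE).2 rfl
  refine ⟨E, hE, ?_, fun G hG ↦ ⟨?_, fun hGE ↦ ?_⟩⟩
  · rw [← space_sup_span_singleton hxE (hE.space_left ▸ hxk), hE.space_left]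
    exact sup_le_sup_left ((Submodule.span_singleton_le_iff_mem _ _).2 hxC) _
  · rintro hdisj rfl
    exact hx0 (Submodule.disjoint_def.1 hdisj x hxC hxE)
  · refine Submodule.disjoint_def.2 fun y hyC hyG ↦ by_contra fun hy0 ↦ hGE ((hiff G hG).1 ?_)
    have hyD : y ∈ D.space (k + 2) := hG.space_le_right hyG
    have hya : y ∉ C.space a := fun h ↦ hy0 (Submodule.disjoint_def.1 hhigh y h hyD)
    rw [← space_sup_span_singleton hyC hya] at hxC
    obtain ⟨c, hc, l, hl, rfl⟩ := Submodule.mem_sup.1 hxC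
    obtain ⟨r, rfl⟩ := Submodule.mem_span_singleton.1 hl
    have hcD : c ∈ D.space (k + 2) :=
      (Submodule.add_mem_iff_left _ (Submodule.smul_mem _ r hyD)).1 hxD
    rw [Submodule.disjoint_def.1 hhigh c hc hcD, zero_add]
    exact Submodule.smul_mem _ r hyG

end Panel

section Hecke

variable (K : Type*) [Ring K] (F n)

/-- The adjacency matrix of the `k`-adjacency relation, which is the image of the `k`-th standard
generator of the Hecke algebra of type `A_n`. It is zero for `k ≥ n`. -/
noncomputable def heckeMatrix (k : ℕ) : Matrix (CompleteFlag F n) (CompleteFlag F n) K :=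
  relMatrix K (Adjacent k)

variable {F n} {k : ℕ}

theorem heckeMatrix_eq_zero (hk : n ≤ k) : heckeMatrix F n K k = 0 := by
  ext C D
  exact if_neg fun h ↦ h.1 (h.2.eq_of_le hk)

theorem transpose_heckeMatrix (k : ℕ) :
    (heckeMatrix F n K k).transpose = heckeMatrix F n K k :=
  transpose_relMatrix K fun _ _ ↦ ⟨.symm, .symm⟩

theorem relMatrix_samePanel [DecidableEq (CompleteFlag F n)] (k : ℕ) :
    relMatrix K (SamePanel (F := F) (n := n) k) = heckeMatrix F n K k + 1 := by
  ext C D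
  rcases eq_or_ne C D with rfl | h
  · simp [relMatrix, heckeMatrix, Adjacent, SamePanel.refl]
  · classical
    rw [Matrix.add_apply, Matrix.one_apply_ne h, add_zero]
    exact if_congr (and_iff_right h).symm rfl rfl

theorem relMatrix_samePanel_mul_self [Fintype F] [Fintype (CompleteFlag F n)] (hk : k < n) :
    relMatrix K (SamePanel (F := F) (n := n) k) * relMatrix K (SamePanel k) =
      ((Fintype.card F + 1 : ℕ) : K) • relMatrix K (SamePanel k) :=
  relMatrix_mul_eq_smul K (fun _ _ _ ↦ .trans) fun C D hCD ↦ by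
    rw [← C.ncard_samePanel hk]
    congr 1
    ext E
    exact ⟨And.left, fun h ↦ ⟨h, h.symm.trans hCD⟩⟩

theorem heckeMatrix_quadratic [Fintype F] [Fintype (CompleteFlag F n)]
    [DecidableEq (CompleteFlag F n)] (hk : k < n) :
    (heckeMatrix F n K k - (Fintype.card F : K) • 1) * (heckeMatrix F n K k + 1) = 0 := by
  have h := relMatrix_samePanel_mul_self (F := F) K hk
  rw [relMatrix_samePanel, add_mul, one_mul, Nat.cast_succ, add_smul, one_smul,
    add_left_inj] at h
  rw [sub_mul, h, smul_mul_assoc, one_mul, sub_self]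

end Hecke

section Factorization

/-- The flags `C` and `D` agree from dimension `m + 2` on, and inside their common
`(m + 2)`-dimensional member they are as opposite as possible subject to
`D.space k ≤ C.space (m + 1)`. This interpolates between equality (`m = 0`, `k = 1`) and
opposition (`m = n`, `k = n + 1`). -/
structure PartiallyOpposite (m k : ℕ) (C D : CompleteFlag F n) : Prop where
  space_eq : ∀ i, m + 2 ≤ i → C.space i = D.space i
  space_le : D.space k ≤ C.space (m + 1)
  disjoint_of_le : ∀ i j, i + j = m + 1 → j ≤ k → Disjoint (C.space i) (D.space j)
  disjoint_of_lt : ∀ i j, i + j = m + 2 → k < j → Disjoint (C.space i) (D.space j)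

/-- The conditions common to `PartiallyOpposite m k` and `PartiallyOpposite m (k + 1)`, none of
which involves the subspace of `D` of dimension `k + 1`. -/
structure PartiallyOppositePanel (m k : ℕ) (C D : CompleteFlag F n) : Prop where
  space_eq : ∀ i, m + 2 ≤ i → C.space i = D.space i
  space_le : D.space k ≤ C.space (m + 1)
  disjoint_of_le : ∀ i j, i + j = m + 1 → j ≤ k → Disjoint (C.space i) (D.space j)
  disjoint_of_lt : ∀ i j, i + j = m + 2 → k + 1 < j → Disjoint (C.space i) (D.space j)

variable {m k : ℕ}

theorem PartiallyOppositePanel.of_samePanel (hkm : k ≤ m) (h : PartiallyOppositePanel m k C D)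
    (hDE : SamePanel k D E) : PartiallyOppositePanel m k C E where
  space_eq i hi := hDE i (by omega) ▸ h.space_eq i hi
  space_le := hDE.space_left ▸ h.space_le
  disjoint_of_le i j hij hj := hDE j (by omega) ▸ h.disjoint_of_le i j hij hj
  disjoint_of_lt i j hij hj := hDE j (by omega) ▸ h.disjoint_of_lt i j hij hj

theorem partiallyOpposite_iff_disjoint {a : ℕ} :
    PartiallyOpposite (a + k) k C D ↔ PartiallyOppositePanel (a + k) k C D ∧
      Disjoint (C.space (a + 1)) (D.space (k + 1)) := by
  refine ⟨fun h ↦ ⟨⟨h.1, h.2, h.3, fun i j hij hj ↦ h.4 i j hij (by omega)⟩,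
    h.4 _ _ (by omega) (by omega)⟩, fun h ↦ ⟨h.1.1, h.1.2, h.1.3, fun i j hij hj ↦ ?_⟩⟩
  rcases (Nat.succ_le_of_lt hj).eq_or_lt with rfl | hj
  · obtain rfl : i = a + 1 := by omega
    exact h.2
  · exact h.1.4 i j hij hj

theorem partiallyOpposite_succ_iff_le {a : ℕ} :
    PartiallyOpposite (a + k) (k + 1) C D ↔ PartiallyOppositePanel (a + k) k C D ∧
      D.space (k + 1) ≤ C.space (a + k + 1) := by
  refine ⟨fun h ↦ ⟨⟨h.1, (D.space_mono k.le_succ).trans h.2,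
    fun i j hij hj ↦ h.3 i j hij (by omega), h.4⟩, h.2⟩,
    fun h ↦ ⟨h.1.1, h.2, fun i j hij hj ↦ ?_, h.1.4⟩⟩
  rcases hj.eq_or_lt with rfl | hj
  · exact (h.1.4 i (k + 2) (by omega) (by omega)).mono_right (D.space_mono (k + 1).le_succ)
  · exact h.1.3 i j hij (Nat.le_of_lt_succ hj)

theorem PartiallyOppositePanel.exists_projection (hkm : k ≤ m) (hm : m < n)
    (h : PartiallyOppositePanel m k C D) :
    ∃ E, SamePanel k D E ∧ ∀ G, SamePanel k D G →
      (PartiallyOpposite m (k + 1) C G ↔ G = E) ∧ (PartiallyOpposite m k C G ↔ G ≠ E) := by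
  obtain ⟨a, rfl⟩ := Nat.exists_eq_add_of_le' hkm
  obtain ⟨E, hE, hle, hiff⟩ := exists_panel_projection (C := C) (D := D) (k := k) (a := a)
    (by omega) (h.space_eq _ le_rfl) (h.disjoint_of_le _ _ (by omega) le_rfl)
    (h.disjoint_of_lt _ _ (by omega) (by omega))
  refine ⟨E, hE, fun G hG ↦ ⟨?_, ?_⟩⟩
  · rw [partiallyOpposite_succ_iff_le, and_iff_right (h.of_samePanel hkm hG)]
    refine ⟨fun hGC ↦ not_not.1 fun hGE ↦ ?_, ?_⟩
    · refine not_disjoint_of_finrank_lt (C.space_mono (by omega)) hGC ?_ ((hiff G hG).2 hGE)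
      rw [C.finrank_space (by omega), C.finrank_space (by omega), G.finrank_space (by omega)]
      omega
    · rintro rfl
      exact hle.trans (sup_le h.space_le (C.space_mono (by omega)))
  · rw [partiallyOpposite_iff_disjoint, and_iff_right (h.of_samePanel hkm hG), hiff G hG]

theorem partiallyOpposite_zero_iff :
    PartiallyOpposite m 0 C D ↔ PartiallyOpposite (m + 1) (m + 2) C D := by
  refine ⟨fun h ↦ ⟨fun i hi ↦ h.1 i (by omega), (h.1 _ le_rfl).ge, fun i j hij hj ↦ ?_,
    fun i j hij hj ↦ ?_⟩, fun h ↦ ⟨fun i hi ↦ ?_, bot_le, fun i j _ hj ↦ ?_, fun i j hij _ ↦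
    h.3 i j hij (by omega)⟩⟩
  · rcases Nat.eq_zero_or_pos j with rfl | hj
    · exact disjoint_bot_right
    · exact h.4 i j hij hj
  · obtain rfl : i = 0 := by omega
    exact disjoint_bot_left
  · rcases hi.eq_or_lt with rfl | hi
    · exact (space_eq_of_le h.2).symm
    · exact h.1 i hi
  · obtain rfl : j = 0 := by omega
    exact disjoint_bot_right

theorem partiallyOpposite_zero_one_iff : PartiallyOpposite 0 1 C D ↔ C = D := by
  refine ⟨fun h ↦ space_injective (funext fun i ↦ ?_), ?_⟩
  · match i with
    | 0 => rfl
    | 1 => exact (space_eq_of_le h.space_le).symm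
    | i + 2 => exact h.space_eq _ (by omega)
  · rintro rfl
    refine ⟨fun _ _ ↦ rfl, le_rfl, fun i j hij hj ↦ ?_, fun i j hij hj ↦ ?_⟩
    · obtain ⟨rfl, rfl⟩ | ⟨rfl, rfl⟩ : i = 0 ∧ j = 1 ∨ i = 1 ∧ j = 0 := by omega
      exacts [disjoint_bot_left, disjoint_bot_right]
    · obtain rfl : i = 0 := by omega
      exact disjoint_bot_left

theorem partiallyOpposite_last_iff : PartiallyOpposite n (n + 1) C D ↔ C.Opposite D := by
  rw [opposite_iff]
  refine ⟨fun h i j hij ↦ h.disjoint_of_le i j hij (by omega), fun h ↦ ⟨fun i hi ↦ ?_, ?_,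
    fun i j hij _ ↦ h i j hij, fun i j hij hj ↦ ?_⟩⟩
  · rw [C.space_eq_top (by omega), D.space_eq_top (by omega)]
  · exact C.space_eq_top n.lt_succ_self ▸ le_top
  · obtain rfl : i = 0 := by omega
    exact disjoint_bot_left

variable (K : Type*) [Ring K] [Fintype (CompleteFlag F n)]

theorem relMatrix_partiallyOpposite_succ_mul (hkm : k ≤ m) (hm : m < n) :
    relMatrix K (PartiallyOpposite (F := F) (n := n) m (k + 1)) * heckeMatrix F n K k =
      relMatrix K (PartiallyOpposite m k) := by
  obtain ⟨a, rfl⟩ := Nat.exists_eq_add_of_le' hkm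
  refine relMatrix_mul_eq K (fun C D hCD ↦ ?_) fun C E D hCE hED ↦ ?_
  · obtain ⟨E, hE, hiff⟩ := (partiallyOpposite_iff_disjoint.1 hCD).1.exists_projection hkm hm
    have hDE : D ≠ E := (hiff D (.refl k D)).2.1 hCD
    exact ⟨E, ⟨(hiff E hE).1.2 rfl, hDE.symm, hE.symm⟩,
      fun G hG ↦ (hiff G hG.2.2.symm).1.1 hG.1⟩
  · obtain ⟨G, -, hiff⟩ := (partiallyOpposite_succ_iff_le.1 hCE).1.exists_projection hkm hm
    obtain rfl : E = G := (hiff E (.refl k E)).1.1 hCE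
    exact (hiff D hED.2).2.2 hED.1.symm

variable [DecidableEq (CompleteFlag F n)]

theorem relMatrix_partiallyOpposite_mul_descProd (hm : m < n) (hk : k ≤ m + 1) :
    relMatrix K (PartiallyOpposite (F := F) (n := n) m k) * descProd (heckeMatrix F n K) k =
      relMatrix K (PartiallyOpposite m 0) := by
  induction k with
  | zero => exact mul_one _
  | succ k ih =>
    rw [descProd, ← mul_assoc, relMatrix_partiallyOpposite_succ_mul K (by omega) hm,
      ih (by omega)]

theorem halfTwist_heckeMatrix (hm : m ≤ n) :
    halfTwist (heckeMatrix F n K) m = relMatrix K (PartiallyOpposite m (m + 1)) := by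
  induction m with
  | zero => exact ((relMatrix_congr K fun _ _ ↦ partiallyOpposite_zero_one_iff).trans
      (relMatrix_eq K)).symm
  | succ m ih =>
    rw [halfTwist, ih (by omega), relMatrix_partiallyOpposite_mul_descProd K (by omega) le_rfl]
    exact relMatrix_congr K fun _ _ ↦ partiallyOpposite_zero_iff

theorem halfTwist_heckeMatrix_eq_opposite :
    halfTwist (heckeMatrix F n K) n = relMatrix K Opposite := by
  rw [halfTwist_heckeMatrix K le_rfl]
  exact relMatrix_congr K fun _ _ ↦ partiallyOpposite_last_iff

end Factorization

section Commutation

/-- The flags `C` and `D` satisfy all the conditions of opposition except possibly the one on the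
subspace of `D` of dimension `k + 1`. -/
def PanelOpposite (k : ℕ) (C D : CompleteFlag F n) : Prop :=
  ∀ i j, i + j = n + 1 → j ≠ k + 1 → Disjoint (C.space i) (D.space j)

variable {k : ℕ}

theorem panelOpposite_comm (hk : k < n) :
    PanelOpposite k C D ↔ PanelOpposite (n - 1 - k) D C :=
  ⟨fun h i j hij hj ↦ (h j i (by omega) (by omega)).symm,
    fun h i j hij hj ↦ (h j i (by omega) (by omega)).symm⟩

theorem PanelOpposite.of_samePanel (h : PanelOpposite k C D) (hDE : SamePanel k D E) :
    PanelOpposite k C E :=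
  fun i j hij hj ↦ hDE j hj ▸ h i j hij hj

theorem Opposite.panelOpposite (h : C.Opposite D) : PanelOpposite k C D :=
  fun i j hij _ ↦ opposite_iff.1 h i j hij

theorem PanelOpposite.opposite_iff_disjoint {a : ℕ} (h : PanelOpposite k C D)
    (ha : a + k + 1 = n) :
    C.Opposite D ↔ Disjoint (C.space (a + 1)) (D.space (k + 1)) := by
  refine ⟨fun h' ↦ opposite_iff.1 h' _ _ (by omega), fun h' ↦ opposite_iff.2 fun i j hij ↦ ?_⟩
  rcases eq_or_ne j (k + 1) with rfl | hj
  · obtain rfl : i = a + 1 := by omega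
    exact h'
  · exact h i j hij hj

theorem PanelOpposite.exists_projection (hk : k < n) (h : PanelOpposite k C D) :
    ∃ E, SamePanel k D E ∧ ∀ G, SamePanel k D G → (C.Opposite G ↔ G ≠ E) := by
  obtain ⟨a, ha⟩ : ∃ a, a + k + 1 = n := ⟨n - 1 - k, by omega⟩
  obtain ⟨E, hE, -, hiff⟩ := exists_panel_projection (C := C) (D := D) (k := k) (a := a)
    (by omega) (by rw [C.space_eq_top (by omega), D.space_eq_top (by omega)])
    ((h (a + 2) k (by omega) (by omega)).mono_left (C.space_mono (Nat.le_succ _)))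
    (h a (k + 2) (by omega) (by omega))
  exact ⟨E, hE, fun G hG ↦ ((h.of_samePanel hG).opposite_iff_disjoint ha).trans (hiff G hG)⟩

theorem PanelOpposite.ncard [Fintype F] [Finite (CompleteFlag F n)] (hk : k < n)
    (h : PanelOpposite k C D) :
    {G | C.Opposite G ∧ SamePanel k G D}.ncard = Fintype.card F := by
  obtain ⟨E, hE, hiff⟩ := h.exists_projection hk
  have hset : {G | C.Opposite G ∧ SamePanel k G D} = {G | SamePanel k D G} \ {E} := by
    ext G
    exact ⟨fun hG ↦ ⟨hG.2.symm, (hiff G hG.2.symm).1 hG.1⟩,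
      fun hG ↦ ⟨(hiff G hG.1).2 hG.2, hG.1.symm⟩⟩
  rw [hset, Set.ncard_sdiff_singleton_of_mem hE, D.ncard_samePanel hk, Nat.add_sub_cancel]

variable (K : Type*) [CommRing K] [Fintype (CompleteFlag F n)]

theorem relMatrix_opposite_mul_samePanel [Fintype F] (hk : k < n) :
    relMatrix K (Opposite (F := F) (n := n)) * relMatrix K (SamePanel k) =
      (Fintype.card F : K) • relMatrix K (PanelOpposite k) :=
  relMatrix_mul_eq_smul K (fun _ _ _ h h' ↦ h.panelOpposite.of_samePanel h')
    fun _ _ ↦ PanelOpposite.ncard hk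

theorem relMatrix_samePanel_mul_opposite [Fintype F] (hk : k < n) :
    relMatrix K (SamePanel (n - 1 - k)) * relMatrix K (Opposite (F := F) (n := n)) =
      (Fintype.card F : K) • relMatrix K (PanelOpposite k) := by
  have h := congrArg Matrix.transpose
    (relMatrix_opposite_mul_samePanel (F := F) K (show n - 1 - k < n by omega))
  rwa [Matrix.transpose_mul, Matrix.transpose_smul,
    transpose_relMatrix K (s := SamePanel (n - 1 - k)) fun _ _ ↦ ⟨.symm, .symm⟩,
    transpose_relMatrix K (s := Opposite) fun _ _ ↦ ⟨.symm, .symm⟩,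
    transpose_relMatrix K (s := PanelOpposite k) fun _ _ ↦ (panelOpposite_comm hk).symm] at h

theorem relMatrix_opposite_mul_heckeMatrix [Finite F] (hk : k < n) :
    relMatrix K Opposite * heckeMatrix F n K k =
      heckeMatrix F n K (n - 1 - k) * relMatrix K Opposite := by
  classical
  have := Fintype.ofFinite F
  have h := (relMatrix_opposite_mul_samePanel (F := F) K hk).trans
    (relMatrix_samePanel_mul_opposite K hk).symm
  rwa [relMatrix_samePanel, relMatrix_samePanel, mul_add, mul_one, add_mul, one_mul,
    add_left_inj] at h

end Commutation

section Connectedness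

theorem exists_space_succ_eq {β : Type*} {f : CompleteFlag F n → β}
    (hf : ∀ k < n, ∀ C D, SamePanel k C D → f C = f D) {i : ℕ} (hi : i ≤ n)
    (hCD : ∀ j ≤ i, C.space j = D.space j) :
    ∃ E, f E = f D ∧ ∀ j ≤ i + 1, C.space j = E.space j := by
  obtain ⟨x, hx, hxi⟩ := C.exists_mem_space_succ_notMem hi
  have descend (l : ℕ) (D : CompleteFlag F n) (hCD : ∀ j ≤ i, C.space j = D.space j)
      (hxD : x ∈ D.space (i + l + 1)) : ∃ E, f E = f D ∧ ∀ j ≤ i + 1, C.space j = E.space j := by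
    induction l generalizing D with
    | zero =>
      refine ⟨D, rfl, fun j hj ↦ ?_⟩
      rcases hj.eq_or_lt with rfl | hj
      · rw [← space_sup_span_singleton hx hxi, hCD i le_rfl,
          space_sup_span_singleton hxD (hCD i le_rfl ▸ hxi)]
      · exact hCD j (by omega)
    | succ l ih =>
      rcases lt_or_ge (i + l) n with hil | hil
      · obtain ⟨E, hE, hxE⟩ := exists_samePanel_mem hil hxD
        obtain ⟨G, hGE, hG⟩ := ih E (fun j hj ↦ (hCD j hj).trans (hE j (by omega))) hxE
        exact ⟨G, hGE.trans (hf _ hil _ _ hE).symm, hG⟩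
      · exact ih D hCD (by rw [D.space_eq_top (by omega)]; exact Submodule.mem_top)
  exact descend n D hCD (by rw [D.space_eq_top (by omega)]; exact Submodule.mem_top)

theorem eq_of_forall_samePanel_eq {β : Type*} {f : CompleteFlag F n → β}
    (hf : ∀ k < n, ∀ C D, SamePanel k C D → f C = f D) (C D : CompleteFlag F n) : f C = f D := by
  have approach (i : ℕ) (hi : i ≤ n + 1) :
      ∃ E, f E = f D ∧ ∀ j ≤ i, C.space j = E.space j := by
    induction i with
    | zero => exact ⟨D, rfl, fun j hj ↦ by rw [Nat.le_zero.1 hj, space_zero, space_zero]⟩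
    | succ i ih =>
      obtain ⟨E, hED, hE⟩ := ih (by omega)
      obtain ⟨G, hGE, hG⟩ := exists_space_succ_eq hf (by omega) hE
      exact ⟨G, hGE.trans hED, hG⟩
  obtain ⟨E, hED, hE⟩ := approach (n + 1) le_rfl
  obtain rfl : C = E := space_injective (funext fun j ↦ by
    rcases le_or_gt j (n + 1) with hj | hj
    · exact hE j hj
    · rw [C.space_eq_top (by omega), E.space_eq_top (by omega)])
  exact hED

end Connectedness

section HeckeAction

variable (F n) (K : Type*) [Field K] [Fintype (CompleteFlag F n)]
  [DecidableEq (CompleteFlag F n)]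

/-- The Hecke generator `heckeMatrix F n K k` as an operator on functions on flags. -/
noncomputable def heckeOp (k : ℕ) : End K (CompleteFlag F n → K) :=
  Matrix.toLinAlgEquiv' (heckeMatrix F n K k)

/-- The adjacency operator of the opposition graph. -/
noncomputable def oppositionOp : End K (CompleteFlag F n → K) :=
  Matrix.toLinAlgEquiv' (relMatrix K Opposite)

variable {F n K} {k : ℕ} {f : CompleteFlag F n → K}

theorem oppositionOp_apply (f : CompleteFlag F n → K) :
    oppositionOp F n K f = (relMatrix K Opposite).mulVec f := rfl

theorem halfTwist_heckeOp : halfTwist (heckeOp F n K) n = oppositionOp F n K := by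
  rw [oppositionOp, ← halfTwist_heckeMatrix_eq_opposite]
  exact (map_halfTwist (Matrix.toLinAlgEquiv' :
    Matrix (CompleteFlag F n) (CompleteFlag F n) K ≃ₐ[K] _).toMonoidHom _ n).symm

theorem oppositionOp_mul_heckeOp [Finite F] (hk : k < n) :
    oppositionOp F n K * heckeOp F n K k = heckeOp F n K (n - 1 - k) * oppositionOp F n K := by
  simp only [oppositionOp, heckeOp, ← map_mul, relMatrix_opposite_mul_heckeMatrix K hk]

theorem heckeOp_quadratic [Fintype F] (hk : k < n) :
    (heckeOp F n K k - (Fintype.card F : K) • 1) * (heckeOp F n K k + 1) = 0 := by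
  simpa [heckeOp] using congrArg Matrix.toLinAlgEquiv' (heckeMatrix_quadratic (F := F) K hk)

open scoped Classical in
theorem heckeOp_apply_add (f : CompleteFlag F n → K) (C : CompleteFlag F n) :
    heckeOp F n K k f C + f C = ∑ D with SamePanel k C D, f D := by
  rw [← relMatrix_mulVec_apply, relMatrix_samePanel, Matrix.add_mulVec, Matrix.one_mulVec]
  rfl

theorem heckeOp_apply_of_samePanel [Fintype F] (hk : k < n)
    (hf : ∀ C D, SamePanel k C D → f C = f D) :
    heckeOp F n K k f = (Fintype.card F : K) • f := by
  classical
  funext C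
  have hsum := heckeOp_apply_add (k := k) f C
  rw [Finset.sum_congr rfl fun D hD ↦ (hf C D (Finset.mem_filter.1 hD).2).symm,
    Finset.sum_const] at hsum
  rw [← Set.toFinset_ofPred, ← Set.ncard_eq_toFinset_card', C.ncard_samePanel hk, succ_nsmul,
    nsmul_eq_mul] at hsum
  exact add_right_cancel hsum

theorem eq_of_samePanel_of_heckeOp_apply [Fintype F] [CharZero K]
    (h : heckeOp F n K k f = (Fintype.card F : K) • f) (hCD : SamePanel k C D) : f C = f D := by
  classical
  have hsum (C : CompleteFlag F n) :
      ((Fintype.card F + 1 : ℕ) : K) * f C = ∑ D with SamePanel k C D, f D := by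
    rw [← heckeOp_apply_add, h, Pi.smul_apply, smul_eq_mul, Nat.cast_succ, add_one_mul]
  have hpanel : ∀ E, SamePanel k C E ↔ SamePanel k D E :=
    fun E ↦ ⟨hCD.symm.trans, hCD.trans⟩
  refine mul_left_cancel₀ (Nat.cast_ne_zero.2 (Fintype.card F).succ_ne_zero) ?_
  rw [hsum, hsum]
  simp only [hpanel]

theorem eq_of_forall_heckeOp_apply [Fintype F] [CharZero K]
    (h : ∀ k < n, heckeOp F n K k f = (Fintype.card F : K) • f) (C D : CompleteFlag F n) :
    f C = f D :=
  eq_of_forall_samePanel_eq (fun k hk _ _ ↦ eq_of_samePanel_of_heckeOp_apply (h k hk)) C D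

end HeckeAction

section Spectrum

variable {K : Type*} [Field K] [Fintype (CompleteFlag F n)] [DecidableEq (CompleteFlag F n)]
  {k : ℕ} {f g : CompleteFlag F n → K}

theorem dotProduct_heckeOp : g ⬝ᵥ heckeOp F n K k f = heckeOp F n K k g ⬝ᵥ f := by
  simp only [heckeOp, Matrix.toLinAlgEquiv'_apply]
  rw [Matrix.dotProduct_mulVec, ← Matrix.mulVec_transpose, transpose_heckeMatrix]

theorem dotProduct_oppositionOp : g ⬝ᵥ oppositionOp F n K f = oppositionOp F n K g ⬝ᵥ f := by
  rw [oppositionOp_apply, oppositionOp_apply, Matrix.dotProduct_mulVec, ← Matrix.mulVec_transpose,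
    transpose_relMatrix K fun _ _ ↦ ⟨Opposite.symm, Opposite.symm⟩]

theorem heckeOp_one [Fintype F] (hk : k < n) :
    heckeOp F n K k 1 = (Fintype.card F : K) • 1 :=
  heckeOp_apply_of_samePanel hk fun _ _ _ ↦ rfl

theorem one_dotProduct_heckeOp_eq_zero [Finite F] (hf : 1 ⬝ᵥ f = 0) :
    1 ⬝ᵥ heckeOp F n K k f = 0 := by
  have := Fintype.ofFinite F
  rcases lt_or_ge k n with hk | hk
  · rw [dotProduct_heckeOp, heckeOp_one hk, smul_dotProduct, hf, smul_zero]
  · rw [heckeOp, heckeMatrix_eq_zero K hk, map_zero, LinearMap.zero_apply, dotProduct_zero]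

theorem commute_oppositionOp_sq_heckeOp [Finite F] (k : ℕ) :
    Commute (oppositionOp F n K ^ 2) (heckeOp F n K k) := by
  rcases lt_or_ge k n with hk | hk
  · have hrev : n - 1 - (n - 1 - k) = k := by omega
    rw [Commute, SemiconjBy, sq, mul_assoc, oppositionOp_mul_heckeOp hk, ← mul_assoc,
      oppositionOp_mul_heckeOp (by omega), hrev, mul_assoc]
  · rw [heckeOp, heckeMatrix_eq_zero K hk, map_zero]
    exact Commute.zero_right _

variable [LinearOrder K] [IsStrictOrderedRing K]

theorem exists_oppositionOp_one_eq_smul [Finite F] :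
    ∃ c : K, 0 ≤ c ∧ oppositionOp F n K 1 = c • 1 := by
  classical
  have := Fintype.ofFinite F
  have hconst := eq_of_forall_heckeOp_apply (f := oppositionOp F n K 1) fun k hk ↦ by
    have hrev : n - 1 - (n - 1 - k) = k := by omega
    have h := LinearMap.congr_fun (oppositionOp_mul_heckeOp (F := F) (K := K)
      (show n - 1 - k < n by omega)) 1
    rw [hrev, End.mul_apply, End.mul_apply, heckeOp_one (by omega), map_smul] at h
    exact h.symm
  have C : CompleteFlag F n := Classical.arbitrary _
  refine ⟨oppositionOp F n K 1 C, ?_, ?_⟩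
  · rw [oppositionOp_apply, relMatrix_mulVec_apply]
    exact Finset.sum_nonneg fun _ _ ↦ zero_le_one
  · ext D
    rw [Pi.smul_apply, Pi.one_apply, smul_eq_mul, mul_one, hconst]

theorem one_dotProduct_eq_zero_of_oppositionOp_apply [Finite F] {μ : K} (hμ : μ < 0)
    (h : oppositionOp F n K f = μ • f) : 1 ⬝ᵥ f = 0 := by
  obtain ⟨c, hc, hone⟩ := exists_oppositionOp_one_eq_smul (F := F) (n := n) (K := K)
  have heq : μ * (1 ⬝ᵥ f) = c * (1 ⬝ᵥ f) := by
    rw [← smul_eq_mul, ← dotProduct_smul, ← h, dotProduct_oppositionOp, hone, smul_dotProduct,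
      smul_eq_mul]
  by_contra hf
  exact (hμ.trans_le hc).ne (mul_right_cancel₀ hf heq)

theorem eq_zero_of_forall_heckeOp_apply [Fintype F] (hf : 1 ⬝ᵥ f = 0)
    (h : ∀ k < n, heckeOp F n K k f = (Fintype.card F : K) • f) : f = 0 := by
  ext C
  have hsum : Fintype.card (CompleteFlag F n) • f C = 0 := by
    rw [← hf, one_dotProduct, ← Finset.card_univ, ← Finset.sum_const]
    exact Finset.sum_congr rfl fun D _ ↦ eq_of_forall_heckeOp_apply h C D
  exact (smul_eq_zero.1 hsum).resolve_left Fintype.card_ne_zero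

theorem sq_le_pow_of_oppositionOp_apply [Fintype F] {μ : K} (hf : f ≠ 0) (hμ : μ < 0)
    (h : oppositionOp F n K f = μ • f) : μ ^ 2 ≤ (Fintype.card F : K) ^ (n ^ 2 - 1) := by
  set E := (oppositionOp F n K ^ 2).eigenspace (μ ^ 2) ⊓
    LinearMap.ker (dotProductBilin K K (1 : CompleteFlag F n → K))
  have hfE : f ∈ E := by
    refine ⟨End.mem_eigenspace_iff.2 ?_, one_dotProduct_eq_zero_of_oppositionOp_apply hμ h⟩
    rw [sq, End.mul_apply, h, map_smul, h, smul_smul, ← sq]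
  have hstable (k : ℕ) (g) (hg : g ∈ E) : heckeOp F n K k g ∈ E :=
    ⟨End.mapsTo_genEigenspace_of_comm (commute_oppositionOp_sq_heckeOp k) _ _ hg.1,
      one_dotProduct_heckeOp_eq_zero hg.2⟩
  rw [← abs_of_nonneg (sq_nonneg μ)]
  refine abs_le_pow_of_halfTwist_sq_of_invariant (E := E) ((Submodule.ne_bot_iff _).2 ⟨f, hfE, hf⟩)
    hstable (Nat.one_le_cast.2 Fintype.card_pos) (fun k ↦ heckeOp_quadratic) (fun k hk ↦ ?_)
    (fun g hg ↦ eq_zero_of_forall_heckeOp_apply hg.2) fun g hg ↦ ?_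
  · rw [halfTwist_heckeOp, oppositionOp_mul_heckeOp hk]
  · rw [halfTwist_heckeOp, ← End.mul_apply, ← sq]
    exact End.mem_eigenspace_iff.1 hg.1

end Spectrum

section ReflectionEigenvector

variable (K : Type*) [Field K]

open scoped Classical in
/-- The function on flags which indicates whether `x` lies in the `i`-dimensional subspace. -/
noncomputable def memIndicator (x : Fin (n + 1) → F) (i : ℕ) : CompleteFlag F n → K :=
  fun C ↦ if x ∈ C.space i then 1 else 0

variable {K} {x y : Fin (n + 1) → F} {k i : ℕ}

theorem memIndicator_zero (hx : x ≠ 0) :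
    (memIndicator K x 0 : CompleteFlag F n → K) = 0 := by
  ext C
  simp [memIndicator, hx]

theorem memIndicator_of_lt (hi : n < i) : (memIndicator K x i : CompleteFlag F n → K) = 1 := by
  ext C
  simp [memIndicator, C.space_eq_top hi]

variable [Fintype (CompleteFlag F n)] [Fintype F]

open scoped Classical in
theorem sum_samePanel_memIndicator (C : CompleteFlag F n) (hk : k < n) :
    ∑ D with SamePanel k C D, memIndicator K x (k + 1) D =
      memIndicator K x (k + 2) C + (Fintype.card F : K) * memIndicator K x k C := by
  simp only [memIndicator]
  by_cases hxk : x ∈ C.space k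
  · rw [Finset.sum_congr rfl fun D hD ↦
      if_pos ((Finset.mem_filter.1 hD).2.space_left_le hxk), Finset.sum_const,
      ← Set.toFinset_ofPred, ← Set.ncard_eq_toFinset_card', C.ncard_samePanel hk]
    simp [hxk, C.space_mono (show k ≤ k + 2 by omega) hxk, add_comm]
  by_cases hx : x ∈ C.space (k + 2)
  · obtain ⟨E, hE, hiff⟩ := exists_samePanel_mem_iff hk hx hxk
    rw [Finset.sum_eq_single_of_mem E (Finset.mem_filter.2 ⟨Finset.mem_univ E, hE⟩)
      fun D hD hDE ↦ if_neg (mt (hiff D (Finset.mem_filter.1 hD).2).1 hDE)]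
    simp [hxk, hx, (hiff E hE).2 rfl]
  · rw [Finset.sum_eq_zero fun D hD ↦
      if_neg fun h ↦ hx (SamePanel.space_le_right (Finset.mem_filter.1 hD).2 h)]
    simp [hxk, hx]

variable [DecidableEq (CompleteFlag F n)]

theorem heckeOp_memIndicator_of_ne (hk : k < n) (hi : i ≠ k + 1) :
    heckeOp F n K k (memIndicator K x i) = (Fintype.card F : K) • memIndicator K x i :=
  heckeOp_apply_of_samePanel hk fun C D hCD ↦ by rw [memIndicator, memIndicator, hCD i hi]

theorem heckeOp_memIndicator_succ (hk : k < n) :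
    heckeOp F n K k (memIndicator K x (k + 1)) =
      memIndicator K x (k + 2) + (Fintype.card F : K) • memIndicator K x k -
        memIndicator K x (k + 1) := by
  ext C
  rw [Pi.sub_apply, eq_sub_iff_add_eq, heckeOp_apply_add, sum_samePanel_memIndicator C hk]
  rfl

theorem isReflectionFamily_memIndicator_sub {s : K} (hs : s ^ 2 = Fintype.card F) (hx : x ≠ 0)
    (hy : y ≠ 0) : IsReflectionFamily n s (heckeOp F n K)
      fun i ↦ memIndicator K x i - memIndicator K y i where
  zero := by rw [memIndicator_zero hx, memIndicator_zero hy, sub_zero]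
  last := by rw [memIndicator_of_lt n.lt_succ_self, memIndicator_of_lt n.lt_succ_self, sub_self]
  apply_of_ne k hk i hi := by
    rw [map_sub, heckeOp_memIndicator_of_ne hk hi, heckeOp_memIndicator_of_ne hk hi, hs, smul_sub]
  apply_succ k hk := by
    rw [map_sub, heckeOp_memIndicator_succ hk, heckeOp_memIndicator_succ hk, hs]
    module

theorem exists_oppositionOp_apply_eq_neg_smul [LinearOrder K] [IsStrictOrderedRing K] {s : K}
    (hs0 : 0 ≤ s) (hs : s ^ 2 = Fintype.card F) (hn : 1 ≤ n) :
    ∃ f, f ≠ 0 ∧ oppositionOp F n K f = -(s ^ (n ^ 2 - 1)) • f := by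
  obtain ⟨m, rfl⟩ := Nat.exists_eq_add_of_le' hn
  have C : CompleteFlag F (m + 1) := Classical.arbitrary _
  obtain ⟨x, hx1, hx0⟩ := C.exists_mem_space_succ_notMem (Nat.zero_le _)
  obtain ⟨y, -, hy⟩ := C.exists_mem_space_succ_notMem le_rfl
  have hy0 : y ≠ 0 := fun h ↦ hy (h ▸ Submodule.zero_mem _)
  set f := fun i ↦ memIndicator K x i - memIndicator K y i with hf
  have hexp : (m + 1) ^ 2 - 1 = m * (m + 2) := Nat.sub_eq_of_eq_add (by ring)
  refine ⟨s ^ m • f 1 + f (m + 1), fun h ↦ ?_, ?_⟩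
  · have hval := congrFun h C
    have hx : ∀ i, 1 ≤ i → x ∈ C.space i := fun i hi ↦ C.space_mono hi hx1
    have hy1 : y ∉ C.space 1 := fun h ↦ hy (C.space_mono hn h)
    simp only [hf, memIndicator, Pi.add_apply, Pi.smul_apply, Pi.sub_apply, Pi.zero_apply,
      if_pos (hx 1 le_rfl), if_pos (hx (m + 1) hn), if_neg hy, if_neg hy1, sub_zero, smul_eq_mul,
      mul_one] at hval
    exact (add_pos_of_nonneg_of_pos (pow_nonneg hs0 m) one_pos).ne' hval
  · rw [hexp, ← halfTwist_heckeOp]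
    exact (isReflectionFamily_memIndicator_sub hs hx0 hy0).halfTwist_apply_smul_add

end ReflectionEigenvector

end CompleteFlag

open scoped Classical in
/-- The smallest eigenvalue of the adjacency matrix `A` of the opposition graph on
complete flags of `F_q^{n+1}` equals `−(√q)^{n²−1} = −q^{(n²−1)/2}`: every real
eigenvalue of `A` is at least `−(√q)^{n²−1}`, and `−(√q)^{n²−1}` is an eigenvalue. -/
theorem opposition_graph_smallest_eigenvalue (n : ℕ) (hn : 1 ≤ n)
    (F : Type) [Field F] [Fintype F] (q : ℕ) (hq : q = Fintype.card F)
    [Fintype (CompleteFlag F n)]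
    (A : Matrix (CompleteFlag F n) (CompleteFlag F n) ℝ)
    (hA : A = fun F1 F2 => if F1.Opposite F2 then (1 : ℝ) else 0) :
    (∀ lam : ℝ, (∃ v : CompleteFlag F n → ℝ, v ≠ 0 ∧ A.mulVec v = lam • v) →
      -(Real.sqrt q ^ (n ^ 2 - 1)) ≤ lam) ∧
    (∃ v : CompleteFlag F n → ℝ, v ≠ 0 ∧
      A.mulVec v = (-(Real.sqrt q ^ (n ^ 2 - 1))) • v) := by
  have hsqrt : √(q : ℝ) ^ 2 = Fintype.card F := by rw [Real.sq_sqrt q.cast_nonneg, hq]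
  have hmul (v : CompleteFlag F n → ℝ) : A.mulVec v = CompleteFlag.oppositionOp F n ℝ v := by
    rw [hA]
    rfl
  simp only [hmul]
  refine ⟨fun lam ⟨v, hv, heig⟩ ↦ ?_,
    CompleteFlag.exists_oppositionOp_apply_eq_neg_smul (Real.sqrt_nonneg _) hsqrt hn⟩
  rcases le_or_gt 0 lam with hlam | hlam
  · exact (neg_nonpos.2 (by positivity)).trans hlam
  · have hsq := CompleteFlag.sq_le_pow_of_oppositionOp_apply hv hlam heig
    rw [← hsqrt, pow_right_comm] at hsq
    exact (abs_le_of_sq_le_sq' hsq (by positivity)).1
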